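/- Let $D : (0,\infty) \times \mathbb{N} \to [0,\infty)$ be non-decreasing in its first argument with $\liminf_{k \to \infty} D(N,k) < \infty$ for some $N > 0$, and let $R : (0,\infty) \times \mathbb{N} \to \mathbb{R}$ satisfy $\lim_{N_0 \to 0^+} \sup_{k \in \mathbb{N},\, 0 < N \le N_0} |R(N,k)| = 0$. Define $\Pi(N,k) := D(N,k) + R(N,k)$ and $\epsilon^\star := \inf_{N > 0} \liminf_{k \to \infty} D(N,k)$. Then there exists a sequence $N_F : \mathbb{N} \to (0,\infty)$ with $\lim_{k \to \infty} N_F(k) = 0$ such that $\liminf_{N_0 \to 0^+} \limsup_{k \to \infty} \inf_{N \in (N_F(k), N_0)} \Pi(N,k) \ge \epsilon^\star$ (infimum over an empty interval interpreted as $+\infty$, or the inequality required only along $k$ with $N_F(k) < N_0$). -/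

import Mathlib

open Filter Topology

/-- Diagonal extraction: countably many properties, each eventually true, hold along an index
tending to infinity. -/
theorem exists_tendsto_atTop_eventually_diagonal {P : ℕ → ℕ → Prop}
    (hP : ∀ m, ∀ᶠ k in atTop, P m k) :
    ∃ φ : ℕ → ℕ, Tendsto φ atTop atTop ∧ ∀ᶠ k in atTop, P (φ k) k := by
  classical
  refine ⟨fun k => Nat.findGreatest (fun m => P m k) k, tendsto_atTop.2 fun m => ?_, ?_⟩
  · filter_upwards [hP m, eventually_ge_atTop m] with k hk hmk
    exact Nat.le_findGreatest hmk hk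
  · filter_upwards [hP 0] with k hk
    exact Nat.findGreatest_spec (P := fun m => P m k) (Nat.zero_le k) hk

/-- Partial inverse cascade (Theorem 4.1, real-variable content).  `D N k` is
the wave-action dissipation below frequency `N` (non-negative, non-decreasing
in `N`, with finite liminf for some `N > 0`), `R` an error vanishing uniformly
in `k` as `N → 0⁺`, and `Pflux = D + R` the normalized wave-action flux.  With
`ε⋆ = inf_{N>0} liminf_k D(N,k)`, there exists `N_F(k) → 0` (positive) such
that `liminf_{N₀→0⁺} limsup_k inf_{N ∈ (N_F(k),N₀)} Pflux(N,k) ≥ ε⋆`.  The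
liminf/limsup/inf are computed in `EReal`; the infimum over an empty interval
is `⊤ = +∞`. -/
theorem partial_inverse_cascade (D R Pflux : ℝ → ℕ → ℝ)
    (hD0 : ∀ (N : ℝ) (k : ℕ), 0 < N → 0 ≤ D N k)
    (hDmono : ∀ (k : ℕ) (N N' : ℝ), 0 < N → N ≤ N' → D N k ≤ D N' k)
    (hfin : ∃ N : ℝ, 0 < N ∧
      Filter.liminf (fun k => (D N k : EReal)) atTop < ⊤)
    (hR : ∀ δ > (0:ℝ), ∃ M > (0:ℝ), ∀ (k : ℕ) (N : ℝ), 0 < N → N ≤ M →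
      |R N k| ≤ δ)
    (hPflux : ∀ (N : ℝ) (k : ℕ), Pflux N k = D N k + R N k) :
    ∃ NF : ℕ → ℝ, (∀ k, 0 < NF k) ∧ Tendsto NF atTop (𝓝 0) ∧
      (⨅ (N : ℝ) (_ : 0 < N), Filter.liminf (fun k => (D N k : EReal)) atTop)
        ≤ Filter.liminf
            (fun N0 : ℝ => Filter.limsup
              (fun k => ⨅ N ∈ Set.Ioo (NF k) N0, (Pflux N k : EReal)) atTop)
            (𝓝[>] (0:ℝ)) := by
  set ε : EReal := ⨅ (N : ℝ) (_ : 0 < N), liminf (fun k => (D N k : EReal)) atTop with hε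
  have ε_le : ∀ N : ℝ, 0 < N → ε ≤ liminf (fun k => (D N k : EReal)) atTop :=
    fun N hN => iInf₂_le N hN
  have ε_top : ε ≠ ⊤ := by
    obtain ⟨N, hN, hlt⟩ := hfin
    exact ((ε_le N hN).trans_lt hlt).ne
  have ε_nonneg : 0 ≤ ε := le_iInf₂ fun N hN =>
    le_liminf_of_le (by isBoundedDefault)
      (Eventually.of_forall fun k => EReal.coe_nonneg.2 (hD0 N k hN))
  clear_value ε
  lift ε to ℝ using ⟨ε_top, ne_bot_of_le_ne_bot EReal.zero_ne_bot ε_nonneg⟩ with e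
  have hpos : ∀ m : ℕ, (0 : ℝ) < 1 / ((m : ℝ) + 1) := fun m => Nat.one_div_pos_of_nat
  obtain ⟨φ, hφ, hDφ⟩ := exists_tendsto_atTop_eventually_diagonal
    (P := fun m k => e - 1 / ((m : ℝ) + 1) < D (1 / ((m : ℝ) + 1)) k) fun m => by
      have hlt : ((e - 1 / ((m : ℝ) + 1) : ℝ) : EReal) < e :=
        EReal.coe_lt_coe_iff.2 (sub_lt_self e (hpos m))
      filter_upwards [eventually_lt_of_lt_liminf (hlt.trans_le (ε_le _ (hpos m)))] with k hk
      exact EReal.coe_lt_coe_iff.1 hk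
  have hNF : Tendsto (fun k => 1 / ((φ k : ℝ) + 1)) atTop (𝓝 0) :=
    tendsto_one_div_add_atTop_nhds_zero_nat.comp hφ
  refine ⟨fun k => 1 / ((φ k : ℝ) + 1), fun k => hpos _, hNF, ?_⟩
  refine EReal.ge_of_forall_gt_iff_ge.1 fun z hz => ?_
  have hδ : 0 < (e - z) / 2 := half_pos (sub_pos.2 (EReal.coe_lt_coe_iff.1 hz))
  obtain ⟨M, hM, hRM⟩ := hR _ hδ
  refine le_liminf_of_le (by isBoundedDefault) ?_
  filter_upwards [Ioo_mem_nhdsGT hM] with N₀ hN₀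
  refine le_limsup_of_frequently_le (Eventually.frequently ?_) (by isBoundedDefault)
  filter_upwards [hDφ, hNF.eventually_lt_const hδ] with k hDk hk
  refine le_iInf₂ fun N hN => EReal.coe_le_coe_iff.2 ?_
  have hN0 : 0 < N := (hpos _).trans hN.1
  have hmono := hDmono k _ N (hpos _) hN.1.le
  have hRk := (abs_le.1 (hRM k N hN0 (hN.2.trans hN₀.2).le)).1
  rw [hPflux]
  linarith
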